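/- Quadrature formula for the soliton mass: let ω > 0 and let φ : ℝ → ℝ be twice continuously differentiable, even, positive, strictly decreasing on [0,∞) with φ′(x) < 0 for x > 0, satisfying φ″ − ωφ + φ⁷/(1+φ⁴) = 0 and φ(x), φ′(x) → 0 as x → ∞. Then the quantity ω ρ² − (1/2)[ρ⁴ − log(1+ρ⁴)] is strictly positive for ρ ∈ (0, φ(0)), and the mass of φ is given by the convergent improper integral ∫_ℝ φ(x)² dx = 2 ∫₀^{φ(0)} ρ² · ( ω ρ² − (1/2)[ ρ⁴ − log(1 + ρ⁴) ] )^{−1/2} dρ. -/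

import Mathlib

open MeasureTheory

/-- Quadrature formula for the soliton mass: for an even, positive soliton profile
`φ`, strictly decreasing on `[0,∞)` with `φ′ < 0` on `(0,∞)`, solving
`φ″ − ωφ + φ⁷/(1+φ⁴) = 0` with `φ, φ′ → 0` at `∞`, the quantity
`ωρ² − (1/2)[ρ⁴ − log(1+ρ⁴)]` is positive on `(0, φ(0))` and
`∫ φ² dx = 2∫₀^{φ(0)} ρ² (ωρ² − (1/2)[ρ⁴ − log(1+ρ⁴)])^{−1/2} dρ`, a convergent improper
integral. -/
theorem soliton_mass_quadrature (ω : ℝ) (hω : 0 < ω) (φ : ℝ → ℝ)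
    (hφ : ContDiff ℝ 2 φ)
    (heven : ∀ x : ℝ, φ (-x) = φ x)
    (hpos : ∀ x : ℝ, 0 < φ x)
    (hanti : StrictAntiOn φ (Set.Ici 0))
    (hderiv_neg : ∀ x : ℝ, 0 < x → deriv φ x < 0)
    (hODE : ∀ x : ℝ, deriv (deriv φ) x - ω * φ x + (φ x) ^ 7 / (1 + (φ x) ^ 4) = 0)
    (hlim : Filter.Tendsto φ Filter.atTop (nhds 0))
    (hlim' : Filter.Tendsto (deriv φ) Filter.atTop (nhds 0)) :
    (∀ ρ ∈ Set.Ioo 0 (φ 0),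
      0 < ω * ρ ^ 2 - (1 / 2) * (ρ ^ 4 - Real.log (1 + ρ ^ 4))) ∧
    IntervalIntegrable
      (fun ρ : ℝ => ρ ^ 2 * (ω * ρ ^ 2 - (1 / 2) * (ρ ^ 4 - Real.log (1 + ρ ^ 4))) ^ (-(1 / 2) : ℝ))
      volume 0 (φ 0) ∧
    ∫ x : ℝ, (φ x) ^ 2
      = 2 * ∫ ρ in (0 : ℝ)..(φ 0),
          ρ ^ 2 * (ω * ρ ^ 2 - (1 / 2) * (ρ ^ 4 - Real.log (1 + ρ ^ 4))) ^ (-(1 / 2) : ℝ) := by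
  have hd1 : ∀ x, HasDerivAt φ (deriv φ x) x := fun x =>
    (hφ.differentiable (by norm_num) x).hasDerivAt
  have hd2 : ∀ x, HasDerivAt (deriv φ) (deriv (deriv φ) x) x := by
    have h : ContDiff ℝ 1 (deriv φ) := by
      have h2 : ContDiff ℝ (1 + 1) φ := by
        norm_num
        exact hφ
      exact (contDiff_succ_iff_deriv.1 h2).2.2
    exact fun x => (h.differentiable (by norm_num) x).hasDerivAt
  set V : ℝ → ℝ := fun ρ => ω * ρ ^ 2 - (1 / 2) * (ρ ^ 4 - Real.log (1 + ρ ^ 4)) with hV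
  have hp4 : ∀ y : ℝ, 0 < 1 + y ^ 4 := fun y => by positivity
  have hVd : ∀ y, HasDerivAt V (2 * ω * y - 2 * (y ^ 7 / (1 + y ^ 4))) y := by
    intro y
    have h1 : HasDerivAt (fun ρ : ℝ => 1 + ρ ^ 4) (4 * y ^ 3) y := by
      simpa using (hasDerivAt_pow 4 y).const_add 1
    have h2 := h1.log (hp4 y).ne'
    have h3 := ((hasDerivAt_pow 2 y).const_mul ω).sub
      (((hasDerivAt_pow 4 y).sub h2).const_mul (1 / 2 : ℝ))
    refine h3.congr_deriv ?_
    have := (hp4 y).ne'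
    push_cast
    field_simp
    ring
  have hVc : Continuous V := continuous_iff_continuousAt.2 fun y => (hVd y).continuousAt
  have hE : ∀ x, (deriv φ x) ^ 2 = V (φ x) := by
    have hG : ∀ x, HasDerivAt (fun x => (deriv φ x) ^ 2 - V (φ x)) 0 x := by
      intro x
      have := ((hd2 x).pow 2).sub ((hVd (φ x)).comp x (hd1 x))
      refine this.congr_deriv ?_
      have h := hODE x
      have h' : deriv (deriv φ) x = ω * φ x - (φ x) ^ 7 / (1 + (φ x) ^ 4) := by linarith
      rw [h']
      push_cast
      ring
    have hconst : ∀ x y, (deriv φ x) ^ 2 - V (φ x) = (deriv φ y) ^ 2 - V (φ y) :=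
      is_const_of_deriv_eq_zero (fun x => (hG x).differentiableAt) (fun x => (hG x).deriv)
    intro x
    have hl : Filter.Tendsto (fun x => (deriv φ x) ^ 2 - V (φ x)) Filter.atTop (nhds (0 ^ 2 - V 0)) :=
      (hlim'.pow 2).sub ((hVc.tendsto 0).comp hlim)
    have hl2 : Filter.Tendsto (fun x => (deriv φ x) ^ 2 - V (φ x)) Filter.atTop
        (nhds ((deriv φ x) ^ 2 - V (φ x))) := by
      refine tendsto_const_nhds.congr fun y => hconst x y
    have h0 := tendsto_nhds_unique hl hl2
    have : V 0 = 0 := by simp [hV]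
    rw [this] at h0
    linarith
  have himg : φ '' Set.Ioi 0 = Set.Ioo 0 (φ 0) := by
    ext ρ
    constructor
    · rintro ⟨x, hx, rfl⟩
      have hx : 0 < x := hx
      exact ⟨hpos x, hanti (Set.mem_Ici.2 le_rfl) (Set.mem_Ici.2 hx.le) hx⟩
    · rintro ⟨h0, h1⟩
      obtain ⟨X, hX1, hX0⟩ := ((hlim.eventually (gt_mem_nhds h0)).and
        (Filter.eventually_ge_atTop 0)).exists
      obtain ⟨x, hx, rfl⟩ := intermediate_value_Icc' hX0 hφ.continuous.continuousOn
        (⟨hX1.le, h1.le⟩ : ρ ∈ Set.Icc (φ X) (φ 0))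
      refine ⟨x, ?_, rfl⟩
      rcases hx.1.eq_or_lt with h | h
      · rw [← h] at h1
        exact absurd h1 (lt_irrefl _)
      · exact h
  have hVpos : ∀ ρ ∈ Set.Ioo 0 (φ 0), 0 < V ρ := by
    rw [← himg]
    rintro _ ⟨x, hx, rfl⟩
    rw [← hE]
    exact by have := (hderiv_neg x hx).ne; positivity
  have hint : IntegrableOn (fun x => (φ x) ^ 2) (Set.Ioi 0) := by
    have hev : ∀ᶠ x in Filter.atTop, (φ x) ^ 6 / (1 + (φ x) ^ 4) < ω / 2 := by
      have hc : Continuous fun y : ℝ => y ^ 6 / (1 + y ^ 4) :=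
        (continuous_id.pow 6).div (by fun_prop) fun y => (hp4 y).ne'
      have := (hc.tendsto 0).comp hlim
      simp only [ne_eq, OfNat.ofNat_ne_zero, not_false_eq_true, zero_pow, zero_div] at this
      exact this.eventually (gt_mem_nhds (by positivity))
    obtain ⟨A, hA⟩ := Filter.eventually_atTop.1 hev
    set B := max A 0
    have hB0 : 0 ≤ B := le_max_right _ _
    have hdd : ∀ x, B ≤ x → ω / 2 * φ x ≤ deriv (deriv φ) x := by
      intro x hx
      have h1 := hA x ((le_max_left _ _).trans hx)
      have h2 := hODE x
      have h3 : (φ x) ^ 7 / (1 + (φ x) ^ 4) = φ x * ((φ x) ^ 6 / (1 + (φ x) ^ 4)) := by ring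
      nlinarith [hpos x]
    have hi : IntegrableOn (deriv (deriv φ)) (Set.Ioi B) :=
      integrableOn_Ioi_deriv_of_nonneg (hd2 B).continuousAt.continuousWithinAt
        (fun x _ => hd2 x)
        (fun x hx => le_trans (by have := hpos x; positivity) (hdd x (le_of_lt hx))) hlim'
    have hc2 : Continuous fun x => (φ x) ^ 2 := hφ.continuous.pow 2
    have hi2 : IntegrableOn (fun x => (φ x) ^ 2) (Set.Ioi B) := by
      refine Integrable.mono' (hi.const_mul (φ 0 * (2 / ω))) hc2.aestronglyMeasurable ?_
      refine (ae_restrict_iff' measurableSet_Ioi).2 (Filter.Eventually.of_forall fun x hx => ?_)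
      have hx : B < x := hx
      have h1 := hdd x hx.le
      have h2 : φ x ≤ φ 0 := hanti.antitoneOn (Set.mem_Ici.2 le_rfl)
        (Set.mem_Ici.2 (hB0.trans hx.le)) (hB0.trans hx.le)
      rw [Real.norm_of_nonneg (sq_nonneg _)]
      have h3 : φ x ≤ 2 / ω * deriv (deriv φ) x := by
        calc φ x = 2 / ω * (ω / 2 * φ x) := by field_simp
          _ ≤ _ := by gcongr
      calc (φ x) ^ 2 = φ x * φ x := by ring
        _ ≤ φ 0 * (2 / ω * deriv (deriv φ) x) :=
          mul_le_mul h2 h3 (hpos x).le (hpos 0).le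
        _ = _ := by ring
    rw [← Set.Ioc_union_Ioi_eq_Ioi hB0]
    exact (hc2.integrableOn_Ioc).union hi2
  have hw : ∀ x ∈ Set.Ioi (0 : ℝ), HasDerivWithinAt φ (deriv φ x) (Set.Ioi 0) x :=
    fun x _ => (hd1 x).hasDerivWithinAt
  have hinj : Set.InjOn φ (Set.Ioi 0) := hanti.injOn.mono Set.Ioi_subset_Ici_self
  have heq : ∀ x ∈ Set.Ioi (0 : ℝ),
      |deriv φ x| • ((φ x) ^ 2 * (V (φ x)) ^ (-(1 / 2) : ℝ)) = (φ x) ^ 2 := by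
    intro x hx
    have hn := abs_pos.2 (hderiv_neg x hx).ne
    rw [← hE, Real.rpow_neg (sq_nonneg _), ← Real.sqrt_eq_rpow, Real.sqrt_sq_eq_abs, smul_eq_mul]
    field_simp
  have hI := integrableOn_image_iff_integrableOn_abs_deriv_smul measurableSet_Ioi hw hinj
    (fun ρ => ρ ^ 2 * (V ρ) ^ (-(1 / 2) : ℝ))
  have hJ := integral_image_eq_integral_abs_deriv_smul measurableSet_Ioi hw hinj
    (fun ρ => ρ ^ 2 * (V ρ) ^ (-(1 / 2) : ℝ))
  rw [himg] at hI hJ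
  rw [integrableOn_congr_fun heq measurableSet_Ioi] at hI
  rw [setIntegral_congr_fun measurableSet_Ioi heq] at hJ
  refine ⟨hVpos, ?_, ?_⟩
  · rw [intervalIntegrable_iff_integrableOn_Ioo_of_le (hpos 0).le]
    exact hI.2 hint
  · rw [intervalIntegral.integral_of_le (hpos 0).le, integral_Ioc_eq_integral_Ioo]
    refine Eq.trans ?_ (congrArg (2 * ·) hJ.symm)
    rw [← integral_comp_abs (f := fun x => (φ x) ^ 2)]
    congr 1
    ext x
    rcases abs_choice x with h | h <;> rw [h]
    rw [heven]
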